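/- Let 17 ≤ N ≤ 30. Then the pull-in voltage of (P)_λ on the unit ball satisfies λ* ≤ H_N/2 = N²(N−4)²/32. -/

import Mathlib

open MeasureTheory Metric Set Filter

/-- The Laplacian of `u : ℝ^N → ℝ`, as the sum of pure second partial derivatives. -/
noncomputable def lap {N : ℕ} (u : EuclideanSpace ℝ (Fin N) → ℝ) (x : EuclideanSpace ℝ (Fin N)) : ℝ :=
  ∑ i : Fin N, fderiv ℝ (fun y => fderiv ℝ u y (EuclideanSpace.single i 1)) x
    (EuclideanSpace.single i 1)

/-- The biharmonic operator `Δ²`. -/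
noncomputable def biharm {N : ℕ} (u : EuclideanSpace ℝ (Fin N) → ℝ)
    (x : EuclideanSpace ℝ (Fin N)) : ℝ :=
  lap (lap u) x

/-- A classical solution of `(P)_λ` on the unit ball `B ⊆ ℝ^N`:
`u ∈ C⁴(B̄)`, `0 < u < 1` in `B`, `Δ²u = λ (1-u)⁻²` in `B`, and `u = 0`, `∂_ν u = 0` on `∂B`. -/
structure IsClassicalSolution (N : ℕ) (lam : ℝ) (u : EuclideanSpace ℝ (Fin N) → ℝ) : Prop where
  contDiffOn : ContDiffOn ℝ 4 u (closedBall (0 : EuclideanSpace ℝ (Fin N)) 1)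
  pos : ∀ x ∈ ball (0 : EuclideanSpace ℝ (Fin N)) 1, 0 < u x
  lt_one : ∀ x ∈ ball (0 : EuclideanSpace ℝ (Fin N)) 1, u x < 1
  eqn : ∀ x ∈ ball (0 : EuclideanSpace ℝ (Fin N)) 1, biharm u x = lam / (1 - u x) ^ 2
  bdry : ∀ x : EuclideanSpace ℝ (Fin N), ‖x‖ = 1 → u x = 0
  bdry_deriv : ∀ x : EuclideanSpace ℝ (Fin N), ‖x‖ = 1 →
    fderivWithin ℝ u (closedBall (0 : EuclideanSpace ℝ (Fin N)) 1) x x = 0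

/-- The set of voltages `λ > 0` for which `(P)_λ` admits a classical solution;
the pull-in voltage `λ*` is its supremum. -/
def solSet (N : ℕ) : Set ℝ := {lam | 0 < lam ∧ ∃ u, IsClassicalSolution N lam u}

/-- `λ̄_N = (8/9)(N - 2/3)(N - 8/3)`. -/
noncomputable def lamBar (N : ℕ) : ℝ := (8 / 9) * ((N : ℝ) - 2 / 3) * ((N : ℝ) - 8 / 3)


/-! ### Analysis on the closed unit ball -/

section Analysis

variable {N : ℕ}

/-- Partial derivative within the closed unit ball. -/
noncomputable def Dw (i : Fin N) (f : EuclideanSpace ℝ (Fin N) → ℝ)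
    (x : EuclideanSpace ℝ (Fin N)) : ℝ :=
  fderivWithin ℝ f (closedBall (0 : EuclideanSpace ℝ (Fin N)) 1) x (EuclideanSpace.single i 1)

theorem udB : UniqueDiffOn ℝ (closedBall (0 : EuclideanSpace ℝ (Fin N)) 1) := by
  apply uniqueDiffOn_convex (convex_closedBall _ _)
  refine ⟨0, ?_⟩
  apply mem_interior.2
  exact ⟨ball 0 1, ball_subset_closedBall, isOpen_ball, by simp⟩

theorem cB_nhds {x : EuclideanSpace ℝ (Fin N)} (hx : x ∈ ball (0 : EuclideanSpace ℝ (Fin N)) 1) :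
    closedBall (0 : EuclideanSpace ℝ (Fin N)) 1 ∈ nhds x :=
  mem_of_superset (isOpen_ball.mem_nhds hx) ball_subset_closedBall

theorem Dw_contDiffOn {m n : WithTop ℕ∞} (i : Fin N) {f : EuclideanSpace ℝ (Fin N) → ℝ}
    (hf : ContDiffOn ℝ n f (closedBall 0 1)) (h : m + 1 ≤ n) :
    ContDiffOn ℝ m (Dw i f) (closedBall 0 1) :=
  (hf.fderivWithin udB h).clm_apply contDiffOn_const

theorem Dw_eq_fderiv (i : Fin N) (f : EuclideanSpace ℝ (Fin N) → ℝ)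
    {x : EuclideanSpace ℝ (Fin N)} (hx : x ∈ ball (0 : EuclideanSpace ℝ (Fin N)) 1) :
    Dw i f x = fderiv ℝ f x (EuclideanSpace.single i 1) := by
  rw [Dw, fderivWithin_of_mem_nhds (cB_nhds hx)]

theorem exists_crossing {x y : EuclideanSpace ℝ (Fin N)} (hx : ‖x‖ ≤ 1) (hy : 1 < ‖y‖) :
    ∃ z : EuclideanSpace ℝ (Fin N), ‖z‖ = 1 ∧ dist x z ≤ dist x y := by
  have hc : ContinuousOn (fun s : ℝ => ‖AffineMap.lineMap x y s‖) (Icc (0 : ℝ) 1) := by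
    apply Continuous.continuousOn
    exact (AffineMap.lineMap_continuous).norm
  obtain ⟨s, hs, hs1⟩ := intermediate_value_Icc (zero_le_one) hc
    (show (1 : ℝ) ∈ Icc _ _ by simpa using ⟨hx, hy.le⟩)
  refine ⟨AffineMap.lineMap x y s, hs1, ?_⟩
  rw [dist_left_lineMap]
  have : ‖s‖ ≤ 1 := by rw [Real.norm_eq_abs, abs_of_nonneg hs.1]; exact hs.2
  nlinarith [dist_nonneg (x := x) (y := y)]

theorem div_lemma (i : Fin N) {f : EuclideanSpace ℝ (Fin N) → ℝ}
    (hf : ContDiffOn ℝ 1 f (closedBall 0 1))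
    (h0 : ∀ x : EuclideanSpace ℝ (Fin N), ‖x‖ = 1 → f x = 0) :
    IntegrableOn (Dw i f) (ball 0 1) ∧ ∫ x in ball 0 1, Dw i f x = 0 := by
  have hcont : ContinuousOn (Dw i f) (closedBall 0 1) :=
    (Dw_contDiffOn (m := 0) i hf (by norm_num)).continuousOn
  have hint : IntegrableOn (Dw i f) (ball 0 1) :=
    (hcont.integrableOn_compact (isCompact_closedBall 0 1)).mono_set ball_subset_closedBall
  refine ⟨hint, ?_⟩
  obtain ⟨C, hC⟩ := (isCompact_closedBall (0 : EuclideanSpace ℝ (Fin N)) 1).exists_bound_of_continuousOn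
    (hf.continuousOn_fderivWithin udB le_rfl)
  have hlip : LipschitzOnWith (Real.toNNReal C) f (closedBall 0 1) := by
    apply Convex.lipschitzOnWith_of_nnnorm_fderivWithin_le (𝕜 := ℝ)
      (hf.differentiableOn (by norm_num)) _ (convex_closedBall _ _)
    intro x hx
    rw [← NNReal.coe_le_coe]
    exact (hC x hx).trans (Real.le_coe_toNNReal C)
  set g : EuclideanSpace ℝ (Fin N) → ℝ := (closedBall 0 1).indicator f with hg
  have gin : ∀ x : EuclideanSpace ℝ (Fin N), ‖x‖ ≤ 1 → g x = f x := fun x hx => by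
    rw [hg, indicator_of_mem]; simpa using hx
  have gout : ∀ x : EuclideanSpace ℝ (Fin N), 1 < ‖x‖ → g x = 0 := fun x hx => by
    rw [hg, indicator_of_notMem]; simpa using hx
  have hcross : ∀ x y : EuclideanSpace ℝ (Fin N), ‖x‖ ≤ 1 → 1 < ‖y‖ →
      dist (g x) (g y) ≤ Real.toNNReal C * dist x y := by
    intro x y hx hy
    obtain ⟨z, hz, hd⟩ := exists_crossing hx hy
    rw [gin x hx, gout y hy, ← h0 z hz]
    calc dist (f x) (f z) ≤ Real.toNNReal C * dist x z :=
          hlip.dist_le_mul x (by simpa using hx) z (by simpa using hz.le)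
      _ ≤ _ := by gcongr
  have glip : LipschitzWith (Real.toNNReal C) g := by
    apply LipschitzWith.of_dist_le_mul
    intro x y
    rcases le_or_gt ‖x‖ 1 with hx | hx <;> rcases le_or_gt ‖y‖ 1 with hy | hy
    · rw [gin x hx, gin y hy]
      exact hlip.dist_le_mul x (by simpa using hx) y (by simpa using hy)
    · exact hcross x y hx hy
    · rw [dist_comm, dist_comm x y]; exact hcross y x hy hx
    · rw [gout x hx, gout y hy, dist_self]; positivity
  have gsupp : HasCompactSupport g := by
    apply HasCompactSupport.intro (isCompact_closedBall (0 : EuclideanSpace ℝ (Fin N)) 1)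
    intro x hx
    rw [hg, indicator_of_notMem hx]
  have key := LipschitzWith.integral_lineDeriv_mul_eq
    (μ := (volume : Measure (EuclideanSpace ℝ (Fin N)))) (C := 0)
    (f := fun _ => (1 : ℝ)) (LipschitzWith.const 1) glip gsupp
    (-(EuclideanSpace.single i (1 : ℝ)))
  have hz : ∀ x v : EuclideanSpace ℝ (Fin N), lineDeriv ℝ (fun _ => (1 : ℝ)) x v = 0 := by
    intro x v
    simp [lineDeriv]
  simp only [hz, zero_mul, integral_zero, neg_neg, mul_one] at key
  rw [key, ← integral_indicator measurableSet_ball]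
  apply integral_congr_ae
  have hs : ∀ᵐ x : EuclideanSpace ℝ (Fin N), x ∉ sphere (0 : EuclideanSpace ℝ (Fin N)) 1 := by
    exact measure_eq_zero_iff_ae_notMem.1 (Measure.addHaar_sphere_of_ne_zero
      (volume : Measure (EuclideanSpace ℝ (Fin N))) 0 one_ne_zero)
  filter_upwards [hs] with x hx
  have hx' : ‖x‖ ≠ 1 := by simpa using hx
  rcases lt_or_gt_of_ne hx' with h | h
  · have hb : x ∈ ball (0 : EuclideanSpace ℝ (Fin N)) 1 := by simpa using h
    rw [indicator_of_mem hb, Dw_eq_fderiv i f hb]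
    have he : g =ᶠ[nhds x] f := by
      filter_upwards [cB_nhds hb] with y hy
      exact gin y (by simpa using hy)
    rw [he.lineDeriv_eq, DifferentiableAt.lineDeriv_eq_fderiv]
    exact (hf.differentiableOn (by norm_num)).differentiableAt (cB_nhds hb)
  · rw [indicator_of_notMem (by simpa using h.le)]
    have he : g =ᶠ[nhds x] fun _ => (0 : ℝ) := by
      have : {y : EuclideanSpace ℝ (Fin N) | 1 < ‖y‖} ∈ nhds x :=
        (isOpen_lt continuous_const continuous_norm).mem_nhds h
      filter_upwards [this] with y hy
      exact gout y hy
    rw [he.lineDeriv_eq]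
    simp [lineDeriv]

/-- Laplacian within the closed ball. -/
noncomputable def lapW (f : EuclideanSpace ℝ (Fin N) → ℝ) (x : EuclideanSpace ℝ (Fin N)) : ℝ :=
  ∑ i : Fin N, Dw i (Dw i f) x

theorem lapW_contDiffOn {m n : WithTop ℕ∞} {f : EuclideanSpace ℝ (Fin N) → ℝ}
    (hf : ContDiffOn ℝ n f (closedBall 0 1)) (h : m + 1 + 1 ≤ n) :
    ContDiffOn ℝ m (lapW f) (closedBall 0 1) := by
  unfold lapW
  exact ContDiffOn.sum fun i _ => Dw_contDiffOn i (Dw_contDiffOn (m := m + 1) i hf h) le_rfl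

theorem lap_congr {f g : EuclideanSpace ℝ (Fin N) → ℝ} {x : EuclideanSpace ℝ (Fin N)}
    (h : f =ᶠ[nhds x] g) : lap f x = lap g x := by
  unfold lap
  refine Finset.sum_congr rfl fun i _ => ?_
  have : (fun y => fderiv ℝ f y (EuclideanSpace.single i 1)) =ᶠ[nhds x]
      (fun y => fderiv ℝ g y (EuclideanSpace.single i 1)) := by
    filter_upwards [h.fderiv (𝕜 := ℝ)] with y hy
    rw [hy]
  rw [this.fderiv_eq]

theorem lap_eq_lapW (f : EuclideanSpace ℝ (Fin N) → ℝ) {x : EuclideanSpace ℝ (Fin N)}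
    (hx : x ∈ ball (0 : EuclideanSpace ℝ (Fin N)) 1) : lap f x = lapW f x := by
  unfold lap lapW
  refine Finset.sum_congr rfl fun i _ => ?_
  rw [Dw_eq_fderiv i _ hx]
  have : (fun y => fderiv ℝ f y (EuclideanSpace.single i 1)) =ᶠ[nhds x] Dw i f := by
    filter_upwards [isOpen_ball.mem_nhds hx] with y hy
    rw [Dw_eq_fderiv i f hy]
  rw [this.fderiv_eq]

theorem biharm_eq_lapW (f : EuclideanSpace ℝ (Fin N) → ℝ) {x : EuclideanSpace ℝ (Fin N)}
    (hx : x ∈ ball (0 : EuclideanSpace ℝ (Fin N)) 1) : biharm f x = lapW (lapW f) x := by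
  unfold biharm
  rw [← lap_eq_lapW _ hx]
  apply lap_congr
  filter_upwards [isOpen_ball.mem_nhds hx] with y hy
  exact lap_eq_lapW f hy

theorem Dw_mul (i : Fin N) {f g : EuclideanSpace ℝ (Fin N) → ℝ} {x : EuclideanSpace ℝ (Fin N)}
    (hx : x ∈ closedBall (0 : EuclideanSpace ℝ (Fin N)) 1)
    (hf : DifferentiableOn ℝ f (closedBall 0 1)) (hg : DifferentiableOn ℝ g (closedBall 0 1)) :
    Dw i (fun y => f y * g y) x = f x * Dw i g x + g x * Dw i f x := by
  unfold Dw
  rw [fderivWithin_fun_mul (udB x hx) (hf x hx) (hg x hx)]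
  simp

theorem Dw_sub (i : Fin N) {f g : EuclideanSpace ℝ (Fin N) → ℝ} {x : EuclideanSpace ℝ (Fin N)}
    (hx : x ∈ closedBall (0 : EuclideanSpace ℝ (Fin N)) 1)
    (hf : DifferentiableOn ℝ f (closedBall 0 1)) (hg : DifferentiableOn ℝ g (closedBall 0 1)) :
    Dw i (fun y => f y - g y) x = Dw i f x - Dw i g x := by
  unfold Dw
  rw [fderivWithin_fun_sub (udB x hx) (hf x hx) (hg x hx)]
  simp

theorem green {f w : EuclideanSpace ℝ (Fin N) → ℝ}
    (hf : ContDiffOn ℝ 2 f (closedBall 0 1)) (hw : ContDiffOn ℝ 2 w (closedBall 0 1))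
    (h0 : ∀ i, ∀ x : EuclideanSpace ℝ (Fin N), ‖x‖ = 1 → f x * Dw i w x - w x * Dw i f x = 0) :
    IntegrableOn (fun x => f x * lapW w x - w x * lapW f x) (ball 0 1) ∧
      ∫ x in ball 0 1, (f x * lapW w x - w x * lapW f x) = 0 := by
  have hDf : ∀ i, ContDiffOn ℝ 1 (Dw i f) (closedBall 0 1) := fun i =>
    Dw_contDiffOn i hf (by norm_num)
  have hDw : ∀ i, ContDiffOn ℝ 1 (Dw i w) (closedBall 0 1) := fun i =>
    Dw_contDiffOn i hw (by norm_num)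
  have hf1 : ContDiffOn ℝ 1 f (closedBall 0 1) := hf.of_le (by norm_num)
  have hw1 : ContDiffOn ℝ 1 w (closedBall 0 1) := hw.of_le (by norm_num)
  have hd : ∀ i, _ := fun i => div_lemma i (((hf1.mul (hDw i)).sub (hw1.mul (hDf i)))) (h0 i)
  have heq : EqOn (fun x => f x * lapW w x - w x * lapW f x)
      (fun x => ∑ i, Dw i (fun y => f y * Dw i w y - w y * Dw i f y) x) (ball 0 1) := by
    intro x hx
    have hx' := ball_subset_closedBall hx
    simp only [lapW, Finset.mul_sum]
    rw [← Finset.sum_sub_distrib]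
    refine Finset.sum_congr rfl fun i _ => ?_
    have d1 := hf1.differentiableOn (by norm_num : (1 : WithTop ℕ∞) ≠ 0)
    have d2 := hw1.differentiableOn (by norm_num : (1 : WithTop ℕ∞) ≠ 0)
    have d3 := (hDf i).differentiableOn (by norm_num : (1 : WithTop ℕ∞) ≠ 0)
    have d4 := (hDw i).differentiableOn (by norm_num : (1 : WithTop ℕ∞) ≠ 0)
    rw [Dw_sub i hx' (d1.fun_mul d4) (d2.fun_mul d3), Dw_mul i hx' d1 d4, Dw_mul i hx' d2 d3]
    ring
  constructor
  · rw [integrableOn_congr_fun heq measurableSet_ball]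
    exact integrable_finsetSum _ fun i _ => (hd i).1
  · rw [setIntegral_congr_fun measurableSet_ball heq, integral_finsetSum _ fun i _ => (hd i).1]
    exact Finset.sum_eq_zero fun i _ => (hd i).2

/-- On the sphere the full gradient of a clamped function vanishes. -/
theorem Dw_bdry {u : EuclideanSpace ℝ (Fin N) → ℝ} (hu : ContDiffOn ℝ 1 u (closedBall 0 1))
    (h0 : ∀ x : EuclideanSpace ℝ (Fin N), ‖x‖ = 1 → u x = 0)
    (h1 : ∀ x : EuclideanSpace ℝ (Fin N), ‖x‖ = 1 →
      fderivWithin ℝ u (closedBall (0 : EuclideanSpace ℝ (Fin N)) 1) x x = 0)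
    (i : Fin N) (x : EuclideanSpace ℝ (Fin N)) (hx : ‖x‖ = 1) : Dw i u x = 0 := by
  have hxB : x ∈ closedBall (0 : EuclideanSpace ℝ (Fin N)) 1 := by simpa using hx.le
  have hd : HasFDerivWithinAt u (fderivWithin ℝ u (closedBall 0 1) x) (closedBall 0 1) x :=
    (hu.differentiableOn (by norm_num) x hxB).hasFDerivWithinAt
  have key : ∀ v : EuclideanSpace ℝ (Fin N), ‖v‖ = 1 → inner ℝ x v = 0 →
      fderivWithin ℝ u (closedBall 0 1) x v = 0 := by
    intro v hv hxv
    set γ : ℝ → EuclideanSpace ℝ (Fin N) := fun θ => Real.cos θ • x + Real.sin θ • v with hγ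
    have hn : ∀ θ, ‖γ θ‖ = 1 := by
      intro θ
      have : ‖γ θ‖ ^ 2 = 1 := by
        rw [hγ]
        simp only
        rw [norm_add_sq_real, norm_smul, norm_smul, hx, hv, real_inner_smul_left,
          real_inner_smul_right, hxv]
        simp
      nlinarith [norm_nonneg (γ θ)]
    have hγ0 : γ 0 = x := by simp [hγ]
    have hγd : HasDerivWithinAt γ v univ 0 := by
      have h1 := ((Real.hasDerivAt_cos 0).smul_const x).add ((Real.hasDerivAt_sin 0).smul_const v)
      simp at h1
      exact h1.hasDerivWithinAt
    rw [← hγ0] at hd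
    have hc := hd.comp_hasDerivWithinAt (0 : ℝ) hγd (fun θ _ => by simp [hn θ])
    have hz : u ∘ γ = fun _ => 0 := funext fun θ => h0 _ (hn θ)
    rw [hz] at hc
    have h2 := (hasDerivAt_const (0 : ℝ) (0 : ℝ))
    have h3 := (hasDerivWithinAt_univ.1 hc).unique h2
    rwa [hγ0] at h3
  have key2 : ∀ v : EuclideanSpace ℝ (Fin N), inner ℝ x v = 0 →
      fderivWithin ℝ u (closedBall 0 1) x v = 0 := by
    intro v hv
    by_cases h : v = 0
    · simp [h]
    have hn : ‖v‖ ≠ 0 := by simpa using h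
    have := key (‖v‖⁻¹ • v) (by rw [norm_smul, norm_inv, norm_norm, inv_mul_cancel₀ hn])
      (by rw [real_inner_smul_right, hv, mul_zero])
    rw [map_smul, smul_eq_mul] at this
    rcases mul_eq_zero.1 this with h | h
    · exact absurd (inv_eq_zero.1 h) hn
    · exact h
  unfold Dw
  set e : EuclideanSpace ℝ (Fin N) := EuclideanSpace.single i 1
  have h3 := key2 (e - (inner ℝ x e : ℝ) • x) (by
    rw [inner_sub_right, real_inner_smul_right, real_inner_self_eq_norm_sq, hx]; ring)
  rw [map_sub, map_smul, h1 x hx] at h3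
  simpa using h3

end Analysis

/-! ### Radial polynomial test functions -/

section Radial

open Polynomial

variable {N : ℕ}

/-- The radial function `F (1 - |x|²)`. -/
noncomputable def rad (F : ℝ[X]) (x : EuclideanSpace ℝ (Fin N)) : ℝ := F.eval (1 - ‖x‖ ^ 2)

/-- The Laplacian on radial polynomials. -/
noncomputable def LP (N : ℕ) (F : ℝ[X]) : ℝ[X] :=
  C 4 * (1 - X) * derivative (derivative F) - C (2 * (N : ℝ)) * derivative F

theorem rad_contDiff (n : WithTop ℕ∞) (F : ℝ[X]) :
    ContDiff ℝ n (rad F : EuclideanSpace ℝ (Fin N) → ℝ) := by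
  have h : ContDiff ℝ n (fun y : ℝ => F.eval y) := by
    simpa using F.contDiff_aeval (𝕜 := ℝ) n
  exact h.comp (contDiff_const.sub (contDiff_norm_sq ℝ))

theorem rad_hasFDerivAt (F : ℝ[X]) (x : EuclideanSpace ℝ (Fin N)) :
    HasFDerivAt (rad F) ((-2 * rad (derivative F) x) • innerSL ℝ x) x := by
  have h1 : HasFDerivAt (fun y : EuclideanSpace ℝ (Fin N) => 1 - ‖y‖ ^ 2)
      (-(2 • innerSL ℝ x)) x := (hasStrictFDerivAt_norm_sq x).hasFDerivAt.const_sub 1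
  have h2 := (F.hasDerivAt (1 - ‖x‖ ^ 2)).comp_hasFDerivAt x h1
  have e : (-2 * rad (derivative F) x) • innerSL ℝ x =
      (derivative F).eval (1 - ‖x‖ ^ 2) • (-(2 • innerSL ℝ x)) := by
    ext v
    simp [rad]
    ring
  rw [e]
  exact h2

theorem Dw_of_hasFDerivAt (i : Fin N) {f : EuclideanSpace ℝ (Fin N) → ℝ}
    {f' : EuclideanSpace ℝ (Fin N) →L[ℝ] ℝ} {x : EuclideanSpace ℝ (Fin N)}
    (hx : x ∈ closedBall (0 : EuclideanSpace ℝ (Fin N)) 1) (hf : HasFDerivAt f f' x) :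
    Dw i f x = f' (EuclideanSpace.single i 1) := by
  rw [Dw, hf.hasFDerivWithinAt.fderivWithin (udB x hx)]

theorem Dw_rad (i : Fin N) (F : ℝ[X]) {x : EuclideanSpace ℝ (Fin N)}
    (hx : x ∈ closedBall (0 : EuclideanSpace ℝ (Fin N)) 1) :
    Dw i (rad F) x = x i * (-2 * rad (derivative F) x) := by
  rw [Dw_of_hasFDerivAt i hx (rad_hasFDerivAt F x)]
  simp [EuclideanSpace.inner_single_right]
  ring

theorem Dw_congr (i : Fin N) {f g : EuclideanSpace ℝ (Fin N) → ℝ}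
    (h : EqOn f g (closedBall 0 1)) : EqOn (Dw i f) (Dw i g) (closedBall 0 1) := by
  intro x hx
  unfold Dw
  rw [fderivWithin_congr h (h hx)]

theorem lapW_congr {f g : EuclideanSpace ℝ (Fin N) → ℝ}
    (h : EqOn f g (closedBall 0 1)) : EqOn (lapW f) (lapW g) (closedBall 0 1) := by
  intro x hx
  unfold lapW
  exact Finset.sum_congr rfl fun i _ => Dw_congr i (Dw_congr i h) hx

theorem Dw_coord_mul (i : Fin N) {g : EuclideanSpace ℝ (Fin N) → ℝ}
    (hg : DifferentiableOn ℝ g (closedBall 0 1)) {x : EuclideanSpace ℝ (Fin N)}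
    (hx : x ∈ closedBall (0 : EuclideanSpace ℝ (Fin N)) 1) :
    Dw i (fun y => y i * g y) x = x i * Dw i g x + g x := by
  have h := (EuclideanSpace.proj i : EuclideanSpace ℝ (Fin N) →L[ℝ] ℝ).hasFDerivAt (x := x)
  have hd : Dw i (fun y : EuclideanSpace ℝ (Fin N) => y i) x = 1 := by
    have := Dw_of_hasFDerivAt (f := fun y : EuclideanSpace ℝ (Fin N) => y i) i hx h
    rw [this]
    simp
  rw [Dw_mul (f := fun y : EuclideanSpace ℝ (Fin N) => y i) i hx _ hg, hd]
  · ring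
  · exact ((EuclideanSpace.proj i : EuclideanSpace ℝ (Fin N) →L[ℝ] ℝ).differentiable).differentiableOn

theorem sum_sq (x : EuclideanSpace ℝ (Fin N)) : ∑ i, x i ^ 2 = ‖x‖ ^ 2 :=
  (EuclideanSpace.real_norm_sq_eq x).symm

theorem rad_diffOn (F : ℝ[X]) :
    DifferentiableOn ℝ (rad F : EuclideanSpace ℝ (Fin N) → ℝ) (closedBall 0 1) :=
  ((rad_contDiff 1 F).differentiable (by norm_num)).differentiableOn

theorem div_rad (F : ℝ[X]) {x : EuclideanSpace ℝ (Fin N)}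
    (hx : x ∈ closedBall (0 : EuclideanSpace ℝ (Fin N)) 1) :
    ∑ i, Dw i (fun y => y i * rad F y) x =
      N * rad F x - 2 * ‖x‖ ^ 2 * rad (derivative F) x := by
  have : ∀ i : Fin N, Dw i (fun y => y i * rad F y) x =
      x i ^ 2 * (-2 * rad (derivative F) x) + rad F x := by
    intro i
    rw [Dw_coord_mul i (rad_diffOn F) hx, Dw_rad i F hx]
    ring
  rw [Finset.sum_congr rfl fun i _ => this i, Finset.sum_add_distrib, ← Finset.sum_mul, sum_sq]
  simp
  ring

theorem lapW_rad (F : ℝ[X]) {x : EuclideanSpace ℝ (Fin N)}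
    (hx : x ∈ closedBall (0 : EuclideanSpace ℝ (Fin N)) 1) :
    lapW (rad F) x = rad (LP N F) x := by
  have h1 : ∀ i : Fin N, Dw i (Dw i (rad F)) x =
      Dw i (fun y => y i * rad (C (-2) * derivative F) y) x := by
    intro i
    apply Dw_congr i _ hx
    intro y hy
    rw [Dw_rad i F hy]
    simp [rad]
  unfold lapW
  rw [Finset.sum_congr rfl fun i _ => h1 i, div_rad _ hx]
  simp [rad, LP]
  ring

/-- The basic identity `∫ φ Δ²u = ∫ u Δ²φ`. -/
theorem test_identity {u : EuclideanSpace ℝ (Fin N) → ℝ} {lam : ℝ}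
    (hu : IsClassicalSolution N lam u) (F : ℝ[X]) (h0 : F.eval 0 = 0)
    (h1 : (derivative F).eval 0 = 0) :
    IntegrableOn (fun x => rad F x * biharm u x - u x * rad (LP N (LP N F)) x) (ball 0 1) ∧
    ∫ x in ball 0 1, (rad F x * biharm u x - u x * rad (LP N (LP N F)) x) = 0 := by
  have hL : ContDiffOn ℝ 2 (lapW u) (closedBall 0 1) :=
    lapW_contDiffOn hu.contDiffOn (by norm_num)
  have hu2 : ContDiffOn ℝ 2 u (closedBall 0 1) := hu.contDiffOn.of_le (by norm_num)
  have hu1 : ContDiffOn ℝ 1 u (closedBall 0 1) := hu.contDiffOn.of_le (by norm_num)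
  have g1 := green (f := rad F) (w := lapW u) (rad_contDiff 2 F).contDiffOn hL (by
    intro i x hx
    have hxB : x ∈ closedBall (0 : EuclideanSpace ℝ (Fin N)) 1 := by simpa using hx.le
    rw [Dw_rad i F hxB]
    simp [rad, hx, h0, h1])
  have g2 := green (f := rad (LP N F)) (w := u) (rad_contDiff 2 _).contDiffOn hu2 (by
    intro i x hx
    rw [Dw_bdry hu1 hu.bdry hu.bdry_deriv i x hx, hu.bdry x hx]
    simp)
  have heq : EqOn (fun x => rad F x * biharm u x - u x * rad (LP N (LP N F)) x)
      (fun x => (rad F x * lapW (lapW u) x - lapW u x * lapW (rad F) x) +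
        (rad (LP N F) x * lapW u x - u x * lapW (rad (LP N F)) x)) (ball 0 1) := by
    intro x hx
    have hxB := ball_subset_closedBall hx
    simp only
    rw [biharm_eq_lapW u hx, lapW_rad F hxB, lapW_rad _ hxB]
    ring
  constructor
  · rw [integrableOn_congr_fun heq measurableSet_ball]
    exact g1.1.add g2.1
  · rw [setIntegral_congr_fun measurableSet_ball heq, integral_add g1.1 g2.1, g1.2, g2.2, add_zero]

theorem rad_integrableOn (F : ℝ[X]) :
    IntegrableOn (rad F : EuclideanSpace ℝ (Fin N) → ℝ) (ball 0 1) :=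
  ((rad_contDiff 0 F).continuous.continuousOn.integrableOn_compact
    (isCompact_closedBall 0 1)).mono_set ball_subset_closedBall

theorem tangent_ineq {s v : ℝ} (hs : 0 ≤ s) (hv0 : 0 < v) (hv1 : v < 1) :
    3 * s ^ 2 - 2 * s ^ 3 + 2 * s ^ 3 * v ≤ 1 / (1 - v) ^ 2 := by
  have h : 0 < 1 - v := by linarith
  rw [le_div_iff₀ (by positivity)]
  obtain ⟨a, ha⟩ : ∃ a, a = s * (1 - v) := ⟨_, rfl⟩
  have ha0 : 0 ≤ a := ha ▸ by positivity
  have : (3 * s ^ 2 - 2 * s ^ 3 + 2 * s ^ 3 * v) * (1 - v) ^ 2 = 3 * a ^ 2 - 2 * a ^ 3 := by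
    rw [ha]; ring
  rw [this]
  nlinarith [mul_nonneg (sq_nonneg (a - 1)) (by linarith : (0 : ℝ) ≤ 2 * a + 1)]

/-- The dual certificate. -/
theorem certificate {L : ℝ} (F S E : ℝ[X])
    (hF0 : F.eval 0 = 0) (hF1 : (derivative F).eval 0 = 0)
    (hF : ∀ y : ℝ, 0 ≤ y → 0 ≤ F.eval y)
    (hS : ∀ y : ℝ, 0 ≤ y → 0 ≤ S.eval y)
    (hE : ∀ y : ℝ, 0 ≤ y → 0 ≤ E.eval y)
    (hL : 0 ≤ L)
    (hc : ∀ y : ℝ, 0 ≤ y →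
      (LP N (LP N F)).eval y ≤ 2 * L * S.eval y ^ 3 * F.eval y + E.eval y)
    (hpos : 0 < ∫ x in ball (0 : EuclideanSpace ℝ (Fin N)) 1,
      rad (C L * F * (3 * S ^ 2 - 2 * S ^ 3) - E) x) :
    ∀ lam ∈ solSet N, lam ≤ L := by
  rintro lam ⟨_, u, hu⟩
  by_contra! hlt
  obtain ⟨hi, hz⟩ := test_identity hu F hF0 hF1
  have hle : ∫ x in ball (0 : EuclideanSpace ℝ (Fin N)) 1,
      rad (C L * F * (3 * S ^ 2 - 2 * S ^ 3) - E) x ≤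
      ∫ x in ball 0 1, (rad F x * biharm u x - u x * rad (LP N (LP N F)) x) := by
    apply setIntegral_mono_on (rad_integrableOn _) hi measurableSet_ball
    intro x hx
    rw [hu.eqn x hx]
    have hx1 : ‖x‖ < 1 := by simpa using hx
    have hy : 0 ≤ 1 - ‖x‖ ^ 2 := by nlinarith [norm_nonneg x]
    have h0 := hu.pos x hx
    have h1 := hu.lt_one x hx
    simp only [rad]
    generalize 1 - ‖x‖ ^ 2 = y at hy
    have a1 := hF y hy
    have a2 := hE y hy
    have a3 := hc y hy
    have a4 := tangent_ineq (hS y hy) h0 h1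
    simp only [eval_sub, eval_mul, eval_C, eval_pow, eval_ofNat]
    have b1 : L * (1 / (1 - u x) ^ 2) ≤ lam / (1 - u x) ^ 2 := by
      rw [div_eq_mul_one_div lam]
      have : 0 ≤ 1 / (1 - u x) ^ 2 := by positivity
      gcongr
    have b2 := mul_le_mul_of_nonneg_left a4 hL
    have b3 := mul_le_mul_of_nonneg_left (b2.trans b1) a1
    have b4 := mul_le_mul_of_nonneg_left a3 h0.le
    have b5 : u x * E.eval y ≤ E.eval y := by nlinarith
    nlinarith
  linarith

/-- Moments. -/
theorem moment_rec (F : ℝ[X]) :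
    ∫ x in ball (0 : EuclideanSpace ℝ (Fin N)) 1,
      rad (C (N : ℝ) * (X * F) - 2 * (1 - X) * derivative (X * F)) x = 0 := by
  have hd : ∀ i : Fin N, _ := fun i => div_lemma (f := fun y => y i * rad (X * F) y) i
    (((EuclideanSpace.proj i : EuclideanSpace ℝ (Fin N) →L[ℝ] ℝ).contDiff.mul
      (rad_contDiff 1 (X * F))).contDiffOn) (by intro x hx; simp [rad, hx])
  have heq : EqOn (rad (C (N : ℝ) * (X * F) - 2 * (1 - X) * derivative (X * F)))
      (fun x : EuclideanSpace ℝ (Fin N) => ∑ i, Dw i (fun y => y i * rad (X * F) y) x)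
      (ball 0 1) := by
    intro x hx
    simp only
    rw [div_rad _ (ball_subset_closedBall hx)]
    simp [rad]
  rw [setIntegral_congr_fun measurableSet_ball heq, integral_finsetSum _ fun i _ => (hd i).1]
  exact Finset.sum_eq_zero fun i _ => (hd i).2

/-- Integral over the ball of a radial polynomial. -/
noncomputable def Mom (N : ℕ) (F : ℝ[X]) : ℝ :=
  ∫ x in ball (0 : EuclideanSpace ℝ (Fin N)) 1, rad F x

theorem Mom_add (F G : ℝ[X]) : Mom N (F + G) = Mom N F + Mom N G := by
  unfold Mom
  rw [← integral_add (rad_integrableOn F) (rad_integrableOn G)]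
  simp [rad]

theorem Mom_C_mul (c : ℝ) (F : ℝ[X]) : Mom N (C c * F) = c * Mom N F := by
  unfold Mom
  rw [← integral_const_mul]
  simp [rad]

theorem Mom_pow (k : ℕ) :
    (2 * ((k : ℝ) + 1) + N) * Mom N (X ^ (k + 1)) = 2 * ((k : ℝ) + 1) * Mom N (X ^ k) := by
  have h := moment_rec (N := N) (X ^ k)
  have e : C (N : ℝ) * (X * X ^ k) - 2 * (1 - X) * derivative (X * X ^ k) =
      C (2 * ((k : ℝ) + 1) + N) * X ^ (k + 1) + C (-(2 * ((k : ℝ) + 1))) * X ^ k := by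
    rw [← pow_succ', derivative_X_pow]
    have h2 : (C 2 : ℝ[X]) = 2 := rfl
    simp [h2]
    ring
  rw [e] at h
  change Mom N _ = 0 at h
  rw [Mom_add, Mom_C_mul, Mom_C_mul] at h
  linarith

theorem Mom_one_pos : 0 < Mom N 1 := by
  unfold Mom
  simp only [rad, eval_one]
  rw [setIntegral_const]
  simp only [smul_eq_mul, mul_one]
  exact ENNReal.toReal_pos (measure_ball_pos volume _ one_pos).ne' measure_ball_lt_top.ne

end Radial

/-! ### Integer polynomial arithmetic -/

section IntPoly

open Polynomial

/-- Polynomial with given integer coefficients. -/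
noncomputable def toPoly : List ℤ → ℝ[X]
  | [] => 0
  | a :: l => C (a : ℝ) + X * toPoly l

/-- Sum of coefficient lists. -/
def addL : List ℤ → List ℤ → List ℤ
  | [], m => m
  | a :: l, [] => a :: l
  | a :: l, b :: m => (a + b) :: addL l m

/-- Scalar multiple of a coefficient list. -/
def smulL (c : ℤ) : List ℤ → List ℤ
  | [] => []
  | a :: l => (c * a) :: smulL c l

/-- Product of coefficient lists. -/
def mulL : List ℤ → List ℤ → List ℤ
  | [], _ => []
  | a :: l, m => addL (smulL a m) (0 :: mulL l m)

/-- Weighted coefficients, auxiliary for the derivative. -/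
def derAux : ℤ → List ℤ → List ℤ
  | _, [] => []
  | k, a :: l => (k * a) :: derAux (k + 1) l

/-- Derivative of a coefficient list. -/
def derL : List ℤ → List ℤ
  | [] => []
  | _ :: l => derAux 1 l

/-- The radial Laplacian on coefficient lists. -/
def lapL (N : ℕ) (l : List ℤ) : List ℤ :=
  addL (addL (smulL 4 (derL (derL l))) (smulL (-4) (0 :: derL (derL l))))
    (smulL (-2 * (N : ℤ)) (derL l))

/-- Positive part of the coefficients. -/
def posL : List ℤ → List ℤ
  | [] => []
  | a :: l => (a.toNat : ℤ) :: posL l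

/-- All coefficients are nonnegative. -/
def nnL : List ℤ → Bool
  | [] => true
  | a :: l => decide (0 ≤ a) && nnL l

/-- Denominator of the normalized moment. -/
def denL (N : ℕ) : List ℤ → ℤ → ℤ
  | [], _ => 1
  | _ :: l, k => (2 * (k + 1) + N) * denL N l (k + 1)

/-- Numerator of the normalized moment. -/
def numL (N : ℕ) : List ℤ → ℤ → ℤ
  | [], _ => 0
  | a :: l, k => a * ((2 * (k + 1) + N) * denL N l (k + 1)) + 2 * (k + 1) * numL N l (k + 1)

theorem toPoly_addL (l m : List ℤ) : toPoly (addL l m) = toPoly l + toPoly m := by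
  induction l generalizing m with
  | nil => simp [addL, toPoly]
  | cons a l ih =>
    cases m with
    | nil => simp [addL, toPoly]
    | cons b m =>
      simp only [addL, toPoly, ih, Int.cast_add, C_add]
      ring

theorem toPoly_smulL (c : ℤ) (l : List ℤ) : toPoly (smulL c l) = C (c : ℝ) * toPoly l := by
  induction l with
  | nil => simp [smulL, toPoly]
  | cons a l ih =>
    simp only [smulL, toPoly, ih, Int.cast_mul, C_mul]
    ring

theorem toPoly_mulL (l m : List ℤ) : toPoly (mulL l m) = toPoly l * toPoly m := by
  induction l with
  | nil => simp [mulL, toPoly]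
  | cons a l ih =>
    simp only [mulL, toPoly, toPoly_addL, toPoly_smulL, ih, Int.cast_zero, C_0]
    ring

theorem toPoly_derAux (k : ℤ) (l : List ℤ) :
    toPoly (derAux k l) = C (k : ℝ) * toPoly l + X * derivative (toPoly l) := by
  induction l generalizing k with
  | nil => simp [derAux, toPoly]
  | cons a l ih =>
    simp only [derAux, toPoly, ih, Int.cast_mul, C_mul, Int.cast_add, Int.cast_one, C_add, C_1,
      derivative_add, derivative_mul, derivative_C, derivative_X]
    ring

theorem toPoly_derL (l : List ℤ) : toPoly (derL l) = derivative (toPoly l) := by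
  cases l with
  | nil => simp [derL, toPoly]
  | cons a l => simp [derL, toPoly, toPoly_derAux]

theorem toPoly_lapL (N : ℕ) (l : List ℤ) : toPoly (lapL N l) = LP N (toPoly l) := by
  simp only [lapL, LP, toPoly_addL, toPoly_smulL, toPoly, toPoly_derL]
  push_cast
  simp only [C_neg, C_mul, C_0]
  ring

theorem nnL_eval {l : List ℤ} (h : nnL l = true) (y : ℝ) (hy : 0 ≤ y) :
    0 ≤ (toPoly l).eval y := by
  induction l with
  | nil => simp [toPoly]
  | cons a l ih =>
    simp only [nnL, Bool.and_eq_true, decide_eq_true_eq] at h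
    have h1 : (0 : ℝ) ≤ a := by exact_mod_cast h.1
    have h2 := ih h.2
    simp only [toPoly, eval_add, eval_C, eval_mul, eval_X]
    positivity

theorem nnL_posL (l : List ℤ) : nnL (posL l) = true := by
  induction l with
  | nil => rfl
  | cons a l ih => simp [posL, nnL, ih]

theorem le_posL (l : List ℤ) (y : ℝ) (hy : 0 ≤ y) :
    (toPoly l).eval y ≤ (toPoly (posL l)).eval y := by
  induction l with
  | nil => simp [posL, toPoly]
  | cons a l ih =>
    have h1 : (a : ℝ) ≤ ((a.toNat : ℤ) : ℝ) := by exact_mod_cast Int.self_le_toNat a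
    simp only [posL, toPoly, eval_add, eval_C, eval_mul, eval_X]
    gcongr

theorem denL_pos (N : ℕ) (l : List ℤ) (k : ℤ) (hk : 0 ≤ k) : 0 < denL N l k := by
  induction l generalizing k with
  | nil => simp [denL]
  | cons a l ih =>
    have := ih (k + 1) (by omega)
    simp only [denL]
    positivity

theorem numL_spec (N : ℕ) (l : List ℤ) (k : ℕ) :
    (denL N l k : ℝ) * Mom N (X ^ k * toPoly l) = Mom N (X ^ k) * (numL N l k : ℝ) := by
  induction l generalizing k with
  | nil =>
    have : Mom N 0 = 0 := by simp [Mom, rad]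
    simp [numL, toPoly, this]
  | cons a l ih =>
    have h := ih (k + 1)
    have e : X ^ k * toPoly (a :: l) = C (a : ℝ) * X ^ k + X ^ (k + 1) * toPoly l := by
      simp only [toPoly]; ring
    rw [e, Mom_add, Mom_C_mul]
    have hm := Mom_pow (N := N) k
    simp only [denL, numL]
    push_cast at h ⊢
    linear_combination (2 * ((k : ℝ) + 1) + N) * h + (numL N l (k + 1) : ℝ) * hm

theorem numL_zero (N : ℕ) (l : List ℤ) :
    Mom N (toPoly l) = Mom N 1 * ((numL N l 0 : ℝ) / (denL N l 0 : ℝ)) := by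
  have h := numL_spec N l 0
  have hd : (0 : ℝ) < denL N l 0 := by exact_mod_cast denL_pos N l 0 le_rfl
  simp only [pow_zero, one_mul, Nat.cast_zero] at h
  field_simp
  linarith

/-- `N² (N-4)²`. -/
def HN (N : ℕ) : ℤ := (N : ℤ) ^ 2 * ((N : ℤ) - 4) ^ 2

/-- The defect list. -/
def defL (N : ℕ) (q : ℤ) (F S : List ℤ) : List ℤ :=
  posL (addL (smulL (16 * q ^ 3) (lapL N (lapL N F)))
    (smulL (-HN N) (mulL (mulL S (mulL S S)) F)))

/-- The weight list. -/
def wtL (q : ℤ) (F S : List ℤ) : List ℤ :=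
  mulL F (addL (smulL (3 * q) (mulL S S)) (smulL (-2) (mulL S (mulL S S))))

/-- The numerical certificate check. -/
def chk (N : ℕ) (q : ℤ) (F S : List ℤ) : Bool :=
  nnL F && nnL S && decide (0 < q) &&
    decide (0 < HN N * (numL N (wtL q (0 :: 0 :: F) S) 0 * denL N (defL N q (0 :: 0 :: F) S) 0) -
      2 * (numL N (defL N q (0 :: 0 :: F) S) 0 * denL N (wtL q (0 :: 0 :: F) S) 0))

theorem of_chk {N : ℕ} {q : ℤ} {F S : List ℤ} (h : chk N q F S = true) :
    ∀ lam ∈ solSet N, lam ≤ (N : ℝ) ^ 2 * ((N : ℝ) - 4) ^ 2 / 32 := by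
  simp only [chk, Bool.and_eq_true, decide_eq_true_eq] at h
  obtain ⟨⟨⟨hF, hS⟩, hq⟩, hp⟩ := h
  have hq' : (0 : ℝ) < q := by exact_mod_cast hq
  have hFF : nnL (0 :: 0 :: F) = true := by simp [nnL, hF]
  have hH : (HN N : ℝ) = (N : ℝ) ^ 2 * ((N : ℝ) - 4) ^ 2 := by simp [HN]
  have hz : toPoly (0 :: 0 :: F) = X ^ 2 * toPoly F := by
    simp only [toPoly, Int.cast_zero, C_0]; ring
  rw [← hH]
  have hH0 : (0 : ℝ) ≤ HN N := by rw [hH]; positivity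
  generalize hG : (0 :: 0 :: F : List ℤ) = G at *
  have hEnn : ∀ y : ℝ, 0 ≤ y → 0 ≤ (toPoly (defL N q G S)).eval y :=
    nnL_eval (nnL_posL _)
  apply certificate (toPoly G) (C (1 / (q : ℝ)) * toPoly S)
    (C (1 / (16 * (q : ℝ) ^ 3)) * toPoly (defL N q G S))
  · rw [hz]; simp
  · rw [hz]; simp
  · exact nnL_eval hFF
  · intro y hy
    have := nnL_eval hS y hy
    rw [eval_mul, eval_C]
    positivity
  · intro y hy
    have := hEnn y hy
    rw [eval_mul, eval_C]
    positivity
  · positivity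
  · intro y hy
    have h1 := le_posL (addL (smulL (16 * q ^ 3) (lapL N (lapL N G)))
      (smulL (-HN N) (mulL (mulL S (mulL S S)) G))) y hy
    change _ ≤ (toPoly (defL N q G S)).eval y at h1
    simp only [toPoly_addL, toPoly_smulL, toPoly_lapL, toPoly_mulL, eval_add, eval_mul,
      eval_C] at h1 ⊢
    push_cast at h1
    generalize (toPoly (defL N q G S)).eval y = e at *
    generalize (LP N (LP N (toPoly G))).eval y = d at *
    generalize (toPoly S).eval y = s at *
    generalize (toPoly G).eval y = g at *
    have h2 : 2 * ((HN N : ℝ) / 32) * (1 / (q : ℝ) * s) ^ 3 * g + 1 / (16 * (q : ℝ) ^ 3) * e - d =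
        1 / (16 * (q : ℝ) ^ 3) * (e - (16 * (q : ℝ) ^ 3 * d + -(HN N : ℝ) * (s * (s * s) * g))) := by
      field_simp
      ring
    have h3 : 0 ≤ 1 / (16 * (q : ℝ) ^ 3) *
        (e - (16 * (q : ℝ) ^ 3 * d + -(HN N : ℝ) * (s * (s * s) * g))) :=
      mul_nonneg (by positivity) (by linarith)
    linarith
  · change 0 < Mom N _
    have e : C ((HN N : ℝ) / 32) * toPoly G * (3 * (C (1 / (q : ℝ)) * toPoly S) ^ 2 -
        2 * (C (1 / (q : ℝ)) * toPoly S) ^ 3) - C (1 / (16 * (q : ℝ) ^ 3)) * toPoly (defL N q G S) =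
        C ((HN N : ℝ) / (32 * (q : ℝ) ^ 3)) * toPoly (wtL q G S) +
          C (-(1 / (16 * (q : ℝ) ^ 3))) * toPoly (defL N q G S) := by
      have e1 : C ((HN N : ℝ) / (32 * (q : ℝ) ^ 3)) = C ((HN N : ℝ) / 32) * C (1 / (q : ℝ)) ^ 3 := by
        rw [← C_pow, ← C_mul]; congr 1; field_simp
      have e2 : C (1 / (q : ℝ)) * C (q : ℝ) = 1 := by
        rw [← C_mul, ← C_1]; congr 1; field_simp
      have e3 : (C 3 : ℝ[X]) = 3 := rfl
      have e4 : (C 2 : ℝ[X]) = 2 := rfl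
      rw [e1]
      simp only [wtL, toPoly_mulL, toPoly_addL, toPoly_smulL]
      push_cast
      simp only [C_neg, C_mul, e3, e4]
      linear_combination (-3 * C ((HN N : ℝ) / 32) * toPoly G * toPoly S ^ 2 *
        C (1 / (q : ℝ)) ^ 2) * e2
    rw [e, Mom_add, Mom_C_mul, Mom_C_mul, numL_zero, numL_zero]
    have d1 : (0 : ℝ) < denL N (wtL q G S) 0 := by exact_mod_cast denL_pos N _ 0 le_rfl
    have d2 : (0 : ℝ) < denL N (defL N q G S) 0 := by exact_mod_cast denL_pos N _ 0 le_rfl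
    have hp' : (0 : ℝ) < HN N * (numL N (wtL q G S) 0 * denL N (defL N q G S) 0) -
      2 * (numL N (defL N q G S) 0 * denL N (wtL q G S) 0) := by exact_mod_cast hp
    have hM := Mom_one_pos (N := N)
    generalize (denL N (wtL q G S) 0 : ℝ) = dw at *
    generalize (denL N (defL N q G S) 0 : ℝ) = de at *
    generalize (numL N (wtL q G S) 0 : ℝ) = nw at *
    generalize (numL N (defL N q G S) 0 : ℝ) = ne at *
    have h2 : (HN N : ℝ) / (32 * (q : ℝ) ^ 3) * (Mom N 1 * (nw / dw)) +
        -(1 / (16 * (q : ℝ) ^ 3)) * (Mom N 1 * (ne / de)) =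
        Mom N 1 / (32 * (q : ℝ) ^ 3 * (dw * de)) * (HN N * (nw * de) - 2 * (ne * dw)) := by
      field_simp
      ring
    rw [h2]
    positivity

end IntPoly

/-! ### Certificates -/

theorem bound17 : ∀ lam ∈ solSet 17,
    lam ≤ ((17 : ℕ) : ℝ) ^ 2 * (((17 : ℕ) : ℝ) - 4) ^ 2 / 32 :=
  of_chk (q := 100) (S := [100, 0, 66, 0, 0, 0, 0, 0, 0, 0, 1022]) (F :=
    [5382, 13893, 29773, 55754, 96743, 157840, 245776, 368071, 533423, 751403, 1032401, 1387391,
    1827683, 2364583, 3009721, 3774299, 4669483, 5705770, 6893017, 8240083, 9754639, 11442865,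
    13309158, 15355785, 17583388, 19990210, 22572561, 25324416, 28237552, 31301500, 34503616,
    37829105, 41261077, 44780577, 48367389, 51999711, 55654609, 59308210, 62936045, 66513321,
    70015261, 73417419, 76696006, 79828199, 82792431, 85568653, 88138560, 90485762, 92595945,
    94456974, 96058976, 97394390, 98457983, 99246842, 99760325, 100000000, 99969539, 99674595,
    99122662, 98322914, 97286034, 96024038, 94550085, 92878286, 91023516, 89001222, 86827236,
    84517593, 82088354, 79555453, 76934536, 74240827, 71489000, 68693066, 65866279, 63021046,
    60168861, 57320249, 54484724, 51670760, 48885773, 46136118, 43427094, 40762954, 38146931,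
    35581263, 33067232, 30605197, 28194642, 25834219, 23521793, 21254497, 19028772, 16840424,
    14684662, 12556151, 10449051, 8357060, 6273449, 4191105, 2102555])
    (by decide +kernel)

theorem bound18 : ∀ lam ∈ solSet 18,
    lam ≤ ((18 : ℕ) : ℝ) ^ 2 * (((18 : ℕ) : ℝ) - 4) ^ 2 / 32 :=
  of_chk (q := 10) (S := [10, 0, 0, 0, 55]) (F :=
    [1324, 3559, 7862, 15018, 26393, 43302, 66941, 98069, 137686, 186273, 243744, 309116,
    381430, 459039, 539812, 621010, 700045, 774211, 840983, 898055, 943546, 976115, 995008,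
    1000000, 991410, 970057, 937183, 894320, 843208, 785700, 723665, 658898, 593060, 527621,
    463837, 402727, 345074, 291433, 242155, 197405, 157196, 121418, 89866, 62269, 38315, 17670])
    (by decide +kernel)

theorem bound19 : ∀ lam ∈ solSet 19,
    lam ≤ ((19 : ℕ) : ℝ) ^ 2 * (((19 : ℕ) : ℝ) - 4) ^ 2 / 32 :=
  of_chk (q := 10) (S := [10, 0, 0, 0, 58]) (F :=
    [1047, 2957, 6820, 13522, 24582, 41605, 66180, 99500, 142982, 197484, 263161, 338992,
    423679, 514883, 609404, 703006, 791301, 869566, 933199, 977883, 1000000, 996953, 967401,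
    911328, 830202, 727046, 606432, 474384, 338330, 207029, 90507])
    (by decide +kernel)

theorem bound20 : ∀ lam ∈ solSet 20,
    lam ≤ ((20 : ℕ) : ℝ) ^ 2 * (((20 : ℕ) : ℝ) - 4) ^ 2 / 32 :=
  of_chk (q := 1) (S := [1, 0, 3]) (F :=
    [9389, 26857, 61650, 118660, 203822, 313609, 445751, 586174, 724435, 844360, 935176, 988053,
    1000000, 972177, 910632, 823560, 720686, 611177, 502993, 402093, 312383, 235816, 172794,
    122587, 83784, 54662, 33465, 18592, 8700, 2748, 0])
    (by decide +kernel)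

theorem bound21 : ∀ lam ∈ solSet 21,
    lam ≤ ((21 : ℕ) : ℝ) ^ 2 * (((21 : ℕ) : ℝ) - 4) ^ 2 / 32 :=
  of_chk (q := 1) (S := [1, 0, 3]) (F :=
    [7254, 21725, 51931, 103503, 183528, 290608, 423726, 569863, 717401, 847787, 946224, 999325,
    1000000, 946577, 844461, 703760, 538986, 366965, 206310, 76827, 0])
    (by decide +kernel)

theorem bound22 : ∀ lam ∈ solSet 22,
    lam ≤ ((22 : ℕ) : ℝ) ^ 2 * (((22 : ℕ) : ℝ) - 4) ^ 2 / 32 :=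
  of_chk (q := 1) (S := [1, 0, 3]) (F :=
    [4844, 15188, 37837, 78291, 143803, 235576, 354785, 492554, 639389, 778624, 894752, 972165,
    1000000, 972246, 890099, 760565, 596648, 415682, 238888, 90836, 0])
    (by decide +kernel)

theorem bound23 : ∀ lam ∈ solSet 23,
    lam ≤ ((23 : ℕ) : ℝ) ^ 2 * (((23 : ℕ) : ℝ) - 4) ^ 2 / 32 :=
  of_chk (q := 1) (S := [1, 0, 3]) (F :=
    [4387, 14313, 36905, 78521, 147807, 247103, 378186, 530886, 692425, 840134, 950792, 1000000,
    969158, 846966, 634069, 342969])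
    (by decide +kernel)

theorem bound24 : ∀ lam ∈ solSet 24,
    lam ≤ ((24 : ℕ) : ℝ) ^ 2 * (((24 : ℕ) : ℝ) - 4) ^ 2 / 32 :=
  of_chk (q := 1) (S := [1, 0, 3]) (F :=
    [3246, 11031, 29507, 64852, 125830, 216456, 340223, 489804, 653946, 810707, 935297, 1000000,
    981715, 864956, 648513, 347874])
    (by decide +kernel)

theorem bound25 : ∀ lam ∈ solSet 25,
    lam ≤ ((25 : ℕ) : ℝ) ^ 2 * (((25 : ℕ) : ℝ) - 4) ^ 2 / 32 :=
  of_chk (q := 1) (S := [1, 0, 3]) (F :=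
    [2413, 8528, 23631, 53595, 107091, 189429, 305629, 451107, 616479, 781049, 919098, 1000000,
    996041, 886817, 667996, 356723])
    (by decide +kernel)

theorem bound26 : ∀ lam ∈ solSet 26,
    lam ≤ ((26 : ℕ) : ℝ) ^ 2 * (((26 : ℕ) : ℝ) - 4) ^ 2 / 32 :=
  of_chk (q := 1) (S := [1, 0, 3]) (F :=
    [1781, 6535, 18738, 43811, 90076, 163728, 271024, 409986, 573420, 742541, 891652, 988103,
    1000000, 901714, 684602, 365634])
    (by decide +kernel)

theorem bound27 : ∀ lam ∈ solSet 27,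
    lam ≤ ((27 : ℕ) : ℝ) ^ 2 * (((27 : ℕ) : ℝ) - 4) ^ 2 / 32 :=
  of_chk (q := 1) (S := [1, 0, 3]) (F :=
    [1314, 4999, 14816, 35677, 75418, 140776, 238963, 370348, 530028, 701535, 859914, 971270,
    1000000, 915073, 702465, 377070])
    (by decide +kernel)

theorem bound28 : ∀ lam ∈ solSet 28,
    lam ≤ ((28 : ℕ) : ℝ) ^ 2 * (((28 : ℕ) : ℝ) - 4) ^ 2 / 32 :=
  of_chk (q := 1) (S := [1, 0, 3]) (F :=
    [973, 3835, 11734, 29076, 63146, 120964, 210455, 334030, 489060, 661603, 827992, 953738,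
    1000000, 930256, 724138, 392555])
    (by decide +kernel)

theorem bound29 : ∀ lam ∈ solSet 29,
    lam ≤ ((29 : ℕ) : ℝ) ^ 2 * (((29 : ℕ) : ℝ) - 4) ^ 2 / 32 :=
  of_chk (q := 1) (S := [1, 0, 3]) (F :=
    [724, 2951, 9312, 23726, 52898, 103932, 185241, 300979, 450701, 623109, 796275, 935751,
    1000000, 947071, 749436, 412092])
    (by decide +kernel)

theorem bound30 : ∀ lam ∈ solSet 30,
    lam ≤ ((30 : ℕ) : ℝ) ^ 2 * (((30 : ℕ) : ℝ) - 4) ^ 2 / 32 :=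
  of_chk (q := 1) (S := [1, 0, 3]) (F :=
    [541, 2279, 7409, 19394, 44359, 89335, 163035, 271067, 415029, 586311, 765086, 917529,
    1000000, 965312, 778119, 435611])
    (by decide +kernel)

/-- for 17 ≤ N ≤ 30, the pull-in voltage satisfies λ* ≤ H_N/2 = N²(N-4)²/32. -/
theorem pullIn_le_of_dim_17_to_30 (N : ℕ) (hN₁ : 17 ≤ N) (hN₂ : N ≤ 30) :
    ∀ lam ∈ solSet N, lam ≤ (N : ℝ) ^ 2 * ((N : ℝ) - 4) ^ 2 / 32 := by
  interval_cases N
  · exact bound17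
  · exact bound18
  · exact bound19
  · exact bound20
  · exact bound21
  · exact bound22
  · exact bound23
  · exact bound24
  · exact bound25
  · exact bound26
  · exact bound27
  · exact bound28
  · exact bound29
  · exact bound30
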